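/- Let d ≥ 2 and 1 ≤ p < 2d/(d+1). There is a constant C_p (depending also on d and ψ) such that for every measurable function κ : (0,∞) → ℂ with ∫_0^∞ |κ(r)|^p r^{d−1} dr < ∞, the radial kernel K = ∫_0^∞ κ(r) σ_r dr satisfies ‖K̂ · ψ̂‖_{L^∞(ℝ^d)} ≤ C_p (∫_0^∞ |κ(r)|^p r^{d−1} dr)^{1/p}. -/

import Mathlib

open MeasureTheory Metric Set
open scoped FourierTransform ENNReal NNReal

open scoped RealInnerProductSpace
noncomputable section

abbrev Ed (d : ℕ) := EuclideanSpace ℝ (Fin d)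

/-- Surface measure on the sphere of radius `r` centered at the origin in `ℝ^d`:
the `(d-1)`-dimensional Hausdorff measure restricted to the sphere. -/
def sphereM (d : ℕ) (r : ℝ) : Measure (Ed d) :=
  (μH[(d : ℝ) - 1]).restrict (Metric.sphere (0 : Ed d) r)

/-- `ψ₀` is admissible: radial, `C^∞`, supported in the ball of radius `1/10`, and
its Fourier transform vanishes to order `20d` at the origin. -/
def Admissible (d : ℕ) (ψ₀ : Ed d → ℂ) : Prop :=
  ContDiff ℝ (⊤ : ℕ∞) ψ₀ ∧
  (∀ x, ψ₀ x ≠ 0 → ‖x‖ ≤ 1 / 10) ∧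
  (∀ x y : Ed d, ‖x‖ = ‖y‖ → ψ₀ x = ψ₀ y) ∧
  (∀ n : ℕ, n < 20 * d → iteratedFDeriv ℝ n (𝓕 ψ₀) 0 = 0)

/-- `ψ = ψ₀ * ψ₀` (convolution). -/
def psiOf (d : ℕ) (ψ₀ : Ed d → ℂ) : Ed d → ℂ :=
  fun x => ∫ y, ψ₀ y * ψ₀ (x - y)

/-- `F_{y,r} = σ_r * ψ(· - y)`. -/
def Fyr (d : ℕ) (ψ₀ : Ed d → ℂ) (y : Ed d) (r : ℝ) : Ed d → ℂ :=
  fun x => ∫ z, psiOf d ψ₀ (x - y - z) ∂(sphereM d r)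

/-!
The surface measure of the unit sphere is rotation invariant and supported where `|x| = 1`, so its
characteristic function is radial and satisfies `Δ g = -g`; along every ray it solves the Bessel
equation `f'' + ((d - 1) / s) f' + f = 0`. The function `h = s ^ ((d - 1) / 2) f` then satisfies
`h'' = (c / s ^ 2 - 1) h`, and since `c / s ^ 2` is integrable at infinity the energy
`|h| ^ 2 + |h'| ^ 2` stays bounded; hence `|σ̂_r(ξ)| ≲ r ^ (d - 1) (1 + r |ξ|) ^ (-(d - 1) / 2)`.

With respect to `r ^ (d - 1) dr` the weight `(1 + s) ^ (-(d - 1) / 2)` lies in `L ^ p'` exactly when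
`p < 2d / (d + 1)`. Hölder's inequality and the scaling `s = r |ξ|` therefore give
`|K̂(ξ)| ≲ |ξ| ^ (-d / p') ‖κ‖_p`, and the singularity at `ξ = 0` is absorbed by the vanishing of
`ψ̂ = (ψ̂₀) ^ 2` there.
-/

section BesselDecay

variable {F : Type*} [NormedAddCommGroup F] [InnerProductSpace ℝ F]

lemma hasDerivAt_energy_mul_exp {h h' : ℝ → F} {c s : ℝ} (hs : 0 < s)
    (hh : HasDerivAt h (h' s) s) (hh' : HasDerivAt h' ((c / s ^ 2 - 1) • h s) s) :
    HasDerivAt (fun t => (‖h t‖ ^ 2 + ‖h' t‖ ^ 2) * Real.exp (|c| / t))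
      ((2 * c * ⟪h s, h' s⟫ - |c| * (‖h s‖ ^ 2 + ‖h' s‖ ^ 2)) / s ^ 2 * Real.exp (|c| / s)) s := by
  have hexp : HasDerivAt (fun t => Real.exp (|c| / t))
      (Real.exp (|c| / s) * (|c| * -(s ^ 2)⁻¹)) s := by
    simpa only [div_eq_mul_inv] using ((hasDerivAt_inv hs.ne').const_mul |c|).exp
  refine ((hh.norm_sq.add hh'.norm_sq).mul hexp).congr_deriv ?_
  rw [real_inner_smul_right, real_inner_comm (h s)]
  simp only [Pi.add_apply]
  field_simp
  ring

lemma two_mul_mul_inner_le (c : ℝ) (x y : F) :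
    2 * c * ⟪x, y⟫ ≤ |c| * (‖x‖ ^ 2 + ‖y‖ ^ 2) :=
  calc 2 * c * ⟪x, y⟫ ≤ |2 * c * ⟪x, y⟫| := le_abs_self _
    _ = |c| * (2 * |⟪x, y⟫|) := by rw [abs_mul, abs_mul, abs_two]; ring
    _ ≤ |c| * (2 * (‖x‖ * ‖y‖)) := by gcongr; exact abs_real_inner_le_norm x y
    _ ≤ |c| * (‖x‖ ^ 2 + ‖y‖ ^ 2) := by
      gcongr
      linarith [two_mul_le_add_sq ‖x‖ ‖y‖]

lemma exists_norm_le_of_deriv_deriv_eq_smul {h h' : ℝ → F} {c : ℝ}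
    (hh : ∀ s > 0, HasDerivAt h (h' s) s)
    (hh' : ∀ s > 0, HasDerivAt h' ((c / s ^ 2 - 1) • h s) s) :
    ∃ B, ∀ s ≥ 1, ‖h s‖ ≤ B := by
  let E : ℝ → ℝ := fun t => (‖h t‖ ^ 2 + ‖h' t‖ ^ 2) * Real.exp (|c| / t)
  have hE : ∀ s > 0, HasDerivAt E _ s := fun s hs =>
    hasDerivAt_energy_mul_exp hs (hh s hs) (hh' s hs)
  have E_antitone : AntitoneOn E (Ioi 0) := by
    refine antitoneOn_of_deriv_nonpos (convex_Ioi 0)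
      (fun s hs => (hE s hs).continuousAt.continuousWithinAt)
      (fun s hs => (hE s (interior_subset hs)).differentiableAt.differentiableWithinAt)
      fun s hs => ?_
    rw [(hE s (interior_subset hs)).deriv]
    exact mul_nonpos_of_nonpos_of_nonneg (div_nonpos_of_nonpos_of_nonneg
      (sub_nonpos.2 (two_mul_mul_inner_le c _ _)) (sq_nonneg s)) (Real.exp_pos _).le
  refine ⟨√(E 1), fun s hs => Real.le_sqrt_of_sq_le ?_⟩
  have s_pos : 0 < s := one_pos.trans_le hs
  calc ‖h s‖ ^ 2 ≤ (‖h s‖ ^ 2 + ‖h' s‖ ^ 2) * 1 := by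
        rw [mul_one]; exact le_add_of_nonneg_right (sq_nonneg _)
    _ ≤ E s := by
        exact mul_le_mul_of_nonneg_left (Real.one_le_exp (by positivity)) (by positivity)
    _ ≤ E 1 := E_antitone (mem_Ioi.2 one_pos) (mem_Ioi.2 s_pos) hs

lemma exists_rpow_mul_norm_le_of_bessel {f f' : ℝ → F} {m : ℝ}
    (hf : ∀ s > 0, HasDerivAt f (f' s) s)
    (hf' : ∀ s > 0, HasDerivAt f' (-(2 * m / s) • f' s - f s) s) :
    ∃ B, ∀ s ≥ 1, s ^ m * ‖f s‖ ≤ B := by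
  have hrpow (a s : ℝ) (hs : 0 < s) : HasDerivAt (fun t : ℝ => t ^ a) (a * s ^ (a - 1)) s :=
    Real.hasDerivAt_rpow_const (Or.inl hs.ne')
  -- The Liouville substitution `h = s ^ m • f` removes the first-order term.
  obtain ⟨B, hB⟩ := exists_norm_le_of_deriv_deriv_eq_smul (c := m * (m - 1))
    (h := fun s => s ^ m • f s) (h' := fun s => s ^ m • f' s + (m * s ^ (m - 1)) • f s)
    (fun s hs => (hrpow m s hs).smul (hf s hs)) fun s hs => by
      refine (((hrpow m s hs).smul (hf' s hs)).add
        (((hrpow (m - 1) s hs).const_mul m).smul (hf s hs))).congr_deriv ?_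
      rw [Real.rpow_sub_one hs.ne' (m - 1), Real.rpow_sub_one hs.ne' m]
      match_scalars <;> field_simp <;> ring
  refine ⟨B, fun s hs => ?_⟩
  simpa only [norm_smul, Real.norm_of_nonneg (Real.rpow_nonneg (zero_le_one.trans hs) m)]
    using hB s hs

end BesselDecay

section RadialLaplacian

/-- A function on a normed space is radial if its value depends only on the norm of its
argument. -/
def IsRadial {E F : Type*} [Norm E] (g : E → F) : Prop :=
  ∀ ⦃x y : E⦄, ‖x‖ = ‖y‖ → g x = g y

lemma hasDerivAt_comp_smul_const {E F : Type*} [NormedAddCommGroup E] [NormedSpace ℝ E]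
    [NormedAddCommGroup F] [NormedSpace ℝ F] {g : E → F} {s : ℝ} {u : E}
    (hg : DifferentiableAt ℝ g (s • u)) :
    HasDerivAt (fun t : ℝ => g (t • u)) (fderiv ℝ g (s • u) u) s :=
  hg.hasFDerivAt.comp_hasDerivAt s (by simpa using (hasDerivAt_id s).smul_const u)

variable {E F : Type*} [NormedAddCommGroup E] [InnerProductSpace ℝ E]

namespace IsRadial

section NormedSpace

variable [NormedAddCommGroup F] [NormedSpace ℝ F] {g : E → F} {u v w : E}

lemma fderiv_apply_eq_zero (hg : IsRadial g) (hdiff : DifferentiableAt ℝ g w)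
    (hwv : ⟪w, v⟫ = 0) :
    fderiv ℝ g w v = 0 := by
  have hnorm (t : ℝ) : ‖w + t • -v‖ = ‖w + t • v‖ := by
    rw [smul_neg, ← sub_eq_add_neg]
    exact norm_sub_eq_norm_add (by rw [real_inner_smul_left, real_inner_comm, hwv, mul_zero])
  have hodd : fderiv ℝ g w v = -fderiv ℝ g w v := by
    rw [← hdiff.lineDeriv_eq_fderiv, ← lineDeriv_neg]
    simp only [lineDeriv, hg (hnorm _)]
  have := IsAddTorsionFree.of_isTorsionFree ℝ F
  exact self_eq_neg.1 hodd

lemma norm_sq_smul_fderiv_fderiv_apply (hg : IsRadial g) (hC : ContDiff ℝ 2 g)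
    (hwv : ⟪w, v⟫ = 0) :
    ‖w‖ ^ 2 • fderiv ℝ (fderiv ℝ g) w v v = ‖v‖ ^ 2 • fderiv ℝ g w w := by
  -- `w + t • v` and `‖w‖ ^ 2 • v - (t * ‖v‖ ^ 2) • w` are orthogonal for every `t`.
  have hzero (t : ℝ) : fderiv ℝ g (w + t • v) (‖w‖ ^ 2 • v - (t * ‖v‖ ^ 2) • w) = 0 := by
    refine hg.fderiv_apply_eq_zero (hC.differentiable two_ne_zero _) ?_
    simp only [inner_add_left, inner_sub_right, inner_smul_left, inner_smul_right,
      real_inner_self_eq_norm_sq, real_inner_comm w v, hwv]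
    simp only [conj_trivial]
    ring
  have hpoint : HasDerivAt (fun t : ℝ => w + t • v) v 0 := by
    simpa using ((hasDerivAt_id (0 : ℝ)).smul_const v).const_add w
  have hdir : HasDerivAt (fun t : ℝ => ‖w‖ ^ 2 • v - (t * ‖v‖ ^ 2) • w) (-(‖v‖ ^ 2 • w)) 0 := by
    simpa using (((hasDerivAt_id (0 : ℝ)).mul_const (‖v‖ ^ 2)).smul_const w).const_sub (‖w‖ ^ 2 • v)
  have hfderiv : HasFDerivAt (fderiv ℝ g) (fderiv ℝ (fderiv ℝ g) w) w :=
    ((hC.fderiv_right (m := 1) le_rfl).differentiable one_ne_zero w).hasFDerivAt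
  have hderiv := (hfderiv.comp_hasDerivAt_of_eq (0 : ℝ) hpoint (by simp)).clm_apply hdir
  have := hderiv.unique
    ((hasDerivAt_const (0 : ℝ) (0 : F)).congr_of_eventuallyEq (.of_forall hzero))
  simpa [← sub_eq_add_neg, sub_eq_zero] using this

open InnerProductSpace Laplacian in
lemma norm_sq_smul_laplacian [FiniteDimensional ℝ E] (hg : IsRadial g) (hC : ContDiff ℝ 2 g)
    (hw : w ≠ 0) :
    ‖w‖ ^ 2 • Δ g w = fderiv ℝ (fderiv ℝ g) w w w +
      ((Module.finrank ℝ E : ℝ) - 1) • fderiv ℝ g w w := by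
  have : Nontrivial E := ⟨w, 0, hw⟩
  obtain ⟨n, hn⟩ := Nat.exists_eq_succ_of_ne_zero (Module.finrank_pos (R := ℝ) (M := E)).ne'
  have honb : Orthonormal ℝ (({0} : Set (Fin (n + 1))).domRestrict fun _ => ‖w‖⁻¹ • w) :=
    ⟨fun _ => norm_smul_inv_norm (𝕜 := ℝ) hw, fun i j hij => (hij (Subsingleton.elim i j)).elim⟩
  obtain ⟨b, hb⟩ := honb.exists_orthonormalBasis_extension_of_card_eq (by simpa using hn)
  replace hb : b 0 = ‖w‖⁻¹ • w := hb 0 rfl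
  have hw' : ‖w‖ ≠ 0 := norm_ne_zero_iff.2 hw
  have hradial (H : E →L[ℝ] E →L[ℝ] F) : ‖w‖ ^ 2 • H (b 0) (b 0) = H w w := by
    simp only [hb, map_smul, FunLike.coe_smul, Pi.smul_apply, smul_smul]
    field_simp
    rw [one_smul]
  have htangent (i : Fin n) :
      ‖w‖ ^ 2 • fderiv ℝ (fderiv ℝ g) w (b i.succ) (b i.succ) = fderiv ℝ g w w := by
    have hwb : ⟪w, b i.succ⟫ = 0 := by
      rw [← smul_inv_smul₀ hw' w, ← hb, real_inner_smul_left,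
        b.inner_eq_zero (Fin.succ_ne_zero i).symm, mul_zero]
    rw [hg.norm_sq_smul_fderiv_fderiv_apply hC hwb, b.norm_eq_one, one_pow, one_smul]
  simp only [laplacian_eq_iteratedFDeriv_orthonormalBasis g b, iteratedFDeriv_two_apply,
    Fin.sum_univ_succ, smul_add, Finset.smul_sum, Matrix.cons_val_zero, Matrix.cons_val_one,
    hradial, htangent, hn]
  simp [Nat.cast_smul_eq_nsmul]

open InnerProductSpace Laplacian in
lemma fderiv_fderiv_apply_of_laplacian_eq_neg [FiniteDimensional ℝ E] (hg : IsRadial g)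
    (hC : ContDiff ℝ 2 g) (hΔ : ∀ w, Δ g w = -g w) {s : ℝ} (hu : ‖u‖ = 1) (hs : 0 < s) :
    fderiv ℝ (fderiv ℝ g) (s • u) u u =
      -(((Module.finrank ℝ E : ℝ) - 1) / s) • fderiv ℝ g (s • u) u - g (s • u) := by
  have hsu : s • u ≠ 0 := smul_ne_zero hs.ne' (norm_pos_iff.1 (hu ▸ one_pos))
  have hlap := hg.norm_sq_smul_laplacian hC hsu
  simp only [hΔ, norm_smul, hu, mul_one, Real.norm_of_nonneg hs.le, map_smul,
    FunLike.coe_smul, Pi.smul_apply] at hlap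
  linear_combination (norm := skip) -(s ^ 2)⁻¹ • hlap
  match_scalars <;> field_simp <;> ring

end NormedSpace

open InnerProductSpace Laplacian in
lemma exists_rpow_mul_norm_le_of_laplacian_eq_neg [FiniteDimensional ℝ E] [Nontrivial E]
    [NormedAddCommGroup F] [InnerProductSpace ℝ F] {g : E → F}
    (hg : IsRadial g) (hC : ContDiff ℝ 2 g) (hΔ : ∀ w, Δ g w = -g w) :
    ∃ B, ∀ w, 1 ≤ ‖w‖ → ‖w‖ ^ (((Module.finrank ℝ E : ℝ) - 1) / 2) * ‖g w‖ ≤ B := by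
  obtain ⟨u, hu⟩ := exists_norm_eq E zero_le_one
  have hC' : Differentiable ℝ (fderiv ℝ g) :=
    (hC.fderiv_right (m := 1) le_rfl).differentiable one_ne_zero
  obtain ⟨B, hB⟩ := exists_rpow_mul_norm_le_of_bessel
    (m := ((Module.finrank ℝ E : ℝ) - 1) / 2)
    (fun s _ => hasDerivAt_comp_smul_const (hC.differentiable two_ne_zero (s • u)))
    fun s hs => ((hasDerivAt_comp_smul_const (hC' (s • u))).clm_apply
      (hasDerivAt_const s u)).congr_deriv <| by
        rw [map_zero, add_zero, hg.fderiv_fderiv_apply_of_laplacian_eq_neg hC hΔ hu hs,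
          mul_div_cancel₀ _ two_ne_zero]
  refine ⟨B, fun w hw => ?_⟩
  have : g w = g (‖w‖ • u) := hg (by simp [norm_smul, hu])
  simpa only [this] using hB ‖w‖ hw

end IsRadial

end RadialLaplacian

section CharFun

lemma memLp_id_of_ae_norm_eq_one {E : Type*} [NormedAddCommGroup E] [MeasurableSpace E]
    [BorelSpace E] [SecondCountableTopology E] {μ : Measure E} [IsFiniteMeasure μ]
    (hμ : ∀ᵐ x ∂μ, ‖x‖ = 1) (q : ℝ≥0∞) : MemLp id q μ :=
  .of_bound aestronglyMeasurable_id 1 (hμ.mono fun _ hx => hx.le)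

variable {E : Type*} [NormedAddCommGroup E] [InnerProductSpace ℝ E] [MeasurableSpace E]
  [BorelSpace E] {μ : Measure E}

/-- A measure on an inner product space is rotation invariant if every linear isometric
automorphism (reflections included) preserves it. -/
def IsRotationInvariant (μ : Measure E) : Prop :=
  ∀ L : E ≃ₗᵢ[ℝ] E, MeasurePreserving L μ μ

lemma IsRotationInvariant.isRadial_charFun (hμ : IsRotationInvariant μ) :
    IsRadial (charFun μ) := by
  intro t t' htt'
  obtain ⟨L, rfl⟩ : ∃ L : E ≃ₗᵢ[ℝ] E, L t = t' :=
    ⟨(Submodule.span ℝ {t - t'})ᗮ.reflection, Submodule.reflection_sub htt'⟩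
  simp only [charFun_apply]
  rw [← (hμ L).integral_comp L.toHomeomorph.measurableEmbedding
    fun x => Complex.exp (⟪x, L t⟫ * _)]
  simp only [L.inner_map_map]

variable [IsFiniteMeasure μ] [FiniteDimensional ℝ E]

open InnerProductSpace Laplacian in
lemma laplacian_charFun_of_ae_norm_eq_one (hμ : ∀ᵐ x ∂μ, ‖x‖ = 1) (t : E) :
    Δ (charFun μ) t = -charFun μ t := by
  let b := stdOrthonormalBasis ℝ E
  have hint (i : Fin (Module.finrank ℝ E)) :
      Integrable (fun x => ((⟪x, b i⟫ ^ 2 : ℝ) : ℂ) * Complex.exp (⟪x, t⟫ * Complex.I)) μ := by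
    refine .of_bound (by fun_prop) 1 (hμ.mono fun x hx => ?_)
    simpa [Complex.norm_exp_ofReal_mul_I, hx, b.norm_eq_one, abs_le_one_iff_mul_self_le_one]
      using abs_real_inner_le_norm x (b i)
  rw [laplacian_eq_iteratedFDeriv_orthonormalBasis _ b]
  simp only [iteratedFDeriv_charFun (memLp_id_of_ae_norm_eq_one hμ 2), Fin.prod_univ_two,
    Matrix.cons_val_zero, Matrix.cons_val_one, Complex.I_sq, neg_one_mul, Finset.sum_neg_distrib,
    ← sq]
  rw [← integral_finsetSum _ fun i _ => hint i, charFun_apply]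
  congr 1
  refine integral_congr_ae (hμ.mono fun x hx => ?_)
  have hsum : ∑ i, ((⟪x, b i⟫ ^ 2 : ℝ) : ℂ) = 1 := by
    exact_mod_cast (b.sum_sq_inner_left x).trans (by rw [hx, one_pow])
  simp only [← Finset.sum_mul, hsum, one_mul]

lemma exists_norm_charFun_le_rpow [Nontrivial E] (hμ : ∀ᵐ x ∂μ, ‖x‖ = 1)
    (hrot : IsRotationInvariant μ) :
    ∃ A, ∀ t, ‖charFun μ t‖ ≤ A * (1 + ‖t‖) ^ (-(((Module.finrank ℝ E : ℝ) - 1) / 2)) := by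
  set m := ((Module.finrank ℝ E : ℝ) - 1) / 2
  have hm : 0 ≤ m := by
    have : (1 : ℝ) ≤ Module.finrank ℝ E := Nat.one_le_cast.2 Module.finrank_pos
    simp only [m]
    linarith
  obtain ⟨B, hB⟩ := hrot.isRadial_charFun.exists_rpow_mul_norm_le_of_laplacian_eq_neg
    (contDiff_charFun (memLp_id_of_ae_norm_eq_one hμ 2))
    (laplacian_charFun_of_ae_norm_eq_one hμ)
  have hmax (t : E) : max 1 ‖t‖ ^ m * ‖charFun μ t‖ ≤ max (μ.real univ) B := by
    rcases le_total ‖t‖ 1 with ht | ht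
    · rw [max_eq_left ht, Real.one_rpow, one_mul]
      exact (norm_charFun_le t).trans (le_max_left _ _)
    · rw [max_eq_right ht]
      exact (hB t ht).trans (le_max_right _ _)
  refine ⟨2 ^ m * max (μ.real univ) B, fun t => ?_⟩
  rw [Real.rpow_neg (by positivity), ← div_eq_mul_inv, le_div_iff₀' (by positivity)]
  calc (1 + ‖t‖) ^ m * ‖charFun μ t‖
      ≤ (2 * max 1 ‖t‖) ^ m * ‖charFun μ t‖ := by
        gcongr
        linarith [le_max_left 1 ‖t‖, le_max_right 1 ‖t‖]
    _ = 2 ^ m * (max 1 ‖t‖ ^ m * ‖charFun μ t‖) := by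
        rw [Real.mul_rpow two_pos.le (by positivity), mul_assoc]
    _ ≤ 2 ^ m * max (μ.real univ) B := by gcongr; exact hmax t

end CharFun

section SphereMeasure

section Finiteness

variable {E : Type*} [NormedAddCommGroup E] [InnerProductSpace ℝ E]

lemma norm_stereoToFun_le_two {v x : E} (hx : ‖x‖ = 1) (hvx : ⟪v, x⟫ ≤ 0) :
    ‖stereoToFun v x‖ ≤ 2 := by
  rw [stereoToFun_apply, innerSL_apply_apply, norm_smul,
    Real.norm_of_nonneg (div_nonneg two_pos.le (by linarith))]
  have hfactor : 2 / (1 - ⟪v, x⟫) ≤ 2 := div_le_self two_pos.le (by linarith)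
  have hproj : ‖(ℝ ∙ v)ᗮ.orthogonalProjectionOnto x‖ ≤ 1 :=
    ((ℝ ∙ v)ᗮ.norm_orthogonalProjectionOnto_apply_le x).trans_eq hx
  exact (mul_le_mul hfactor hproj (norm_nonneg _) two_pos.le).trans_eq (mul_one 2)

lemma sphere_inter_halfSpace_subset_image_closedBall {v : E} (hv : ‖v‖ = 1) :
    sphere (0 : E) 1 ∩ {x | ⟪v, x⟫ ≤ 0} ⊆
      (fun w : (ℝ ∙ v)ᗮ => stereoInvFunAux v w) '' closedBall 0 2 := by
  rintro x ⟨hx, hvx : ⟪v, x⟫ ≤ 0⟩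
  have hxv : x ≠ v := by
    rintro rfl
    rw [real_inner_self_eq_norm_sq, hv] at hvx
    norm_num at hvx
  refine ⟨stereoToFun v x, ?_, congrArg Subtype.val (stereo_left_inv hv (x := ⟨x, hx⟩) hxv)⟩
  rw [mem_closedBall_zero_iff]
  exact norm_stereoToFun_le_two (mem_sphere_zero_iff_norm.1 hx) hvx

variable [FiniteDimensional ℝ E] [MeasurableSpace E] [BorelSpace E]

lemma hausdorffMeasure_sphere_inter_halfSpace_lt_top {n : ℕ}
    (hn : Module.finrank ℝ E = n + 1) {v : E} (hv : ‖v‖ = 1) :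
    μH[n] (sphere (0 : E) 1 ∩ {x | ⟪v, x⟫ ≤ 0}) < ∞ := by
  have : Fact (Module.finrank ℝ E = n + 1) := ⟨hn⟩
  have hrank : Module.finrank ℝ (ℝ ∙ v)ᗮ = n :=
    Submodule.finrank_orthogonal_span_singleton (norm_pos_iff.1 (hv ▸ one_pos))
  have hcompact : IsCompact (closedBall (0 : (ℝ ∙ v)ᗮ) 2) := isCompact_closedBall _ _
  have hC1 : ContDiff ℝ 1 fun w : (ℝ ∙ v)ᗮ => stereoInvFunAux v w :=
    contDiff_stereoInvFunAux.comp (ℝ ∙ v)ᗮ.subtypeL.contDiff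
  obtain ⟨L, hL⟩ :=
    hC1.locallyLipschitz.locallyLipschitzOn.exists_lipschitzOnWith_of_compact hcompact
  have hball : μH[n] (closedBall (0 : (ℝ ∙ v)ᗮ) 2) < ∞ := by
    rw [← hrank]
    exact hcompact.measure_lt_top
  calc μH[n] (sphere (0 : E) 1 ∩ {x | ⟪v, x⟫ ≤ 0})
      ≤ μH[n] ((fun w : (ℝ ∙ v)ᗮ => stereoInvFunAux v w) '' closedBall 0 2) :=
        measure_mono (sphere_inter_halfSpace_subset_image_closedBall hv)
    _ ≤ (L : ℝ≥0∞) ^ (n : ℝ) * μH[n] (closedBall (0 : (ℝ ∙ v)ᗮ) 2) :=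
        hL.hausdorffMeasure_image_le n.cast_nonneg
    _ < ∞ := ENNReal.mul_lt_top (by simp) hball

lemma hausdorffMeasure_sphere_lt_top {n : ℕ} (hn : Module.finrank ℝ E = n + 1) :
    μH[n] (sphere (0 : E) 1) < ∞ := by
  have : Nontrivial E := Module.nontrivial_of_finrank_pos (R := ℝ) (by omega)
  obtain ⟨v, hv⟩ := exists_norm_eq E zero_le_one
  have hcover : sphere (0 : E) 1 ⊆
      sphere 0 1 ∩ {x | ⟪v, x⟫ ≤ 0} ∪ sphere 0 1 ∩ {x | ⟪-v, x⟫ ≤ 0} := by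
    intro x hx
    simpa [mem_sphere_zero_iff_norm.1 hx] using le_total ⟪v, x⟫ 0
  exact (measure_mono hcover).trans_lt <| measure_union_lt_top
    (hausdorffMeasure_sphere_inter_halfSpace_lt_top hn hv)
    (hausdorffMeasure_sphere_inter_halfSpace_lt_top hn ((norm_neg v).trans hv))

end Finiteness

variable {d : ℕ}

lemma isFiniteMeasure_sphereM_one (hd : 1 ≤ d) : IsFiniteMeasure (sphereM d 1) := by
  obtain ⟨n, rfl⟩ := Nat.exists_eq_add_of_le' hd
  rw [sphereM, isFiniteMeasure_restrict, Nat.cast_succ, add_sub_cancel_right]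
  exact (hausdorffMeasure_sphere_lt_top (by simp)).ne

lemma ae_norm_eq_one_sphereM_one : ∀ᵐ x ∂sphereM d 1, ‖x‖ = 1 := by
  filter_upwards [ae_restrict_mem isClosed_sphere.measurableSet] with x hx
  exact mem_sphere_zero_iff_norm.1 hx

lemma isRotationInvariant_sphereM (r : ℝ) : IsRotationInvariant (sphereM d r) := by
  intro L
  have hpre : L.toIsometryEquiv ⁻¹' sphere (0 : Ed d) r = sphere 0 r := by
    ext x
    simp
  have := (L.toIsometryEquiv.measurePreserving_hausdorffMeasure ((d : ℝ) - 1)).restrict_preimage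
    (isClosed_sphere (x := (0 : Ed d)) (ε := r)).measurableSet
  rwa [hpre] at this

open scoped Pointwise in
lemma sphereM_eq_smul_map (hd : 1 ≤ d) {r : ℝ} (hr : 0 < r) :
    sphereM d r = ENNReal.ofReal (r ^ (d - 1)) • (sphereM d 1).map (r • ·) := by
  obtain ⟨n, rfl⟩ := Nat.exists_eq_add_of_le' hd
  have hsmul : Measurable fun x : Ed (n + 1) => r • x := measurable_const_smul r
  ext s hs
  have hscale : s ∩ sphere (0 : Ed (n + 1)) r = r • ((r • ·) ⁻¹' s ∩ sphere 0 1) := by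
    ext x
    simp [Set.mem_smul_set_iff_inv_smul_mem₀ hr.ne', smul_inv_smul₀ hr.ne', norm_smul,
      abs_of_pos hr, inv_mul_eq_one₀ hr.ne', eq_comm (a := r)]
  rw [Measure.smul_apply, Measure.map_apply hsmul hs, sphereM, sphereM, Nat.cast_succ,
    add_sub_cancel_right, Measure.restrict_apply hs, Measure.restrict_apply (hsmul hs), hscale,
    Measure.hausdorffMeasure_smul₀ n.cast_nonneg hr.ne', ENNReal.smul_def, NNReal.rpow_natCast,
    ENNReal.coe_pow, ← enorm_eq_nnnorm, Real.enorm_eq_ofReal hr.le, ENNReal.ofReal_pow hr.le,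
    Nat.add_sub_cancel]

/-- `sphereFourier d r ξ` is the Fourier transform `σ̂_r(ξ)` of the surface measure of the sphere
of radius `r`, with the `2π` in the exponent as in `𝓕`. -/
def sphereFourier (d : ℕ) (r : ℝ) (ξ : Ed d) : ℂ :=
  ∫ x, Complex.exp (-((2 * Real.pi * ⟪ξ, x⟫ : ℝ) : ℂ) * Complex.I) ∂sphereM d r

lemma sphereFourier_eq_charFun (r : ℝ) (ξ : Ed d) :
    sphereFourier d r ξ = charFun (sphereM d r) (-(2 * Real.pi) • ξ) := by
  simp only [sphereFourier, charFun_apply, real_inner_smul_right, real_inner_comm, neg_mul,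
    Complex.ofReal_neg]

lemma sphereFourier_eq_pow_mul (hd : 1 ≤ d) {r : ℝ} (hr : 0 < r) (ξ : Ed d) :
    sphereFourier d r ξ = r ^ (d - 1) * charFun (sphereM d 1) (-(2 * Real.pi * r) • ξ) := by
  rw [sphereFourier_eq_charFun, sphereM_eq_smul_map hd hr, charFun_apply, integral_smul_measure,
    ← charFun_apply, charFun_map_smul, smul_smul, ENNReal.toReal_ofReal (by positivity),
    Complex.real_smul, Complex.ofReal_pow]
  congr 3
  ring

lemma exists_norm_sphereFourier_le (hd : 1 ≤ d) :
    ∃ A, ∀ r > 0, ∀ ξ : Ed d,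
      ‖sphereFourier d r ξ‖ ≤ A * (r ^ (d - 1) * (1 + r * ‖ξ‖) ^ (-(((d : ℝ) - 1) / 2))) := by
  have := isFiniteMeasure_sphereM_one hd
  have : Nonempty (Fin d) := ⟨⟨0, hd⟩⟩
  obtain ⟨A, hA⟩ := exists_norm_charFun_le_rpow ae_norm_eq_one_sphereM_one
    (isRotationInvariant_sphereM (d := d) 1)
  simp only [finrank_euclideanSpace_fin] at hA
  have A_nonneg : 0 ≤ A := (norm_nonneg (charFun (sphereM d 1) 0)).trans (by simpa using hA 0)
  have hexp : -(((d : ℝ) - 1) / 2) ≤ 0 := by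
    have : (1 : ℝ) ≤ d := Nat.one_le_cast.2 hd
    linarith
  refine ⟨A, fun r hr ξ => ?_⟩
  have hle : r * ‖ξ‖ ≤ ‖-(2 * Real.pi * r) • ξ‖ := by
    rw [norm_smul, norm_neg, Real.norm_of_nonneg (by positivity)]
    gcongr
    nlinarith [Real.pi_gt_three]
  calc ‖sphereFourier d r ξ‖
      = r ^ (d - 1) * ‖charFun (sphereM d 1) (-(2 * Real.pi * r) • ξ)‖ := by
        rw [sphereFourier_eq_pow_mul hd hr, norm_mul, norm_pow, Complex.norm_of_nonneg hr.le]
    _ ≤ r ^ (d - 1) * (A * (1 + ‖-(2 * Real.pi * r) • ξ‖) ^ (-(((d : ℝ) - 1) / 2))) := by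
        gcongr
        exact hA _
    _ ≤ r ^ (d - 1) * (A * (1 + r * ‖ξ‖) ^ (-(((d : ℝ) - 1) / 2))) := by
        gcongr r ^ (d - 1) * (A * ?_)
        exact Real.rpow_le_rpow_of_nonpos (by positivity) (by linarith) hexp
    _ = A * (r ^ (d - 1) * (1 + r * ‖ξ‖) ^ (-(((d : ℝ) - 1) / 2))) := by ring

end SphereMeasure

section RadialMeasure

/-- The measure `r ^ (d - 1) dr` on `(0, ∞)`, i.e. the radial part of Lebesgue measure on `ℝ^d`
in polar coordinates, viewed as a measure on `ℝ`. -/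
def radialMeasure (d : ℕ) : Measure ℝ :=
  (volume.restrict (Ioi 0)).withDensity fun r => ENNReal.ofReal (r ^ (d - 1))

lemma setLIntegral_Ioi_zero_eq_mul_comp_mul_left (f : ℝ → ℝ≥0∞) {ρ : ℝ} (hρ : 0 < ρ) :
    ∫⁻ r in Ioi 0, f r = ENNReal.ofReal ρ * ∫⁻ r in Ioi 0, f (ρ * r) := by
  have hpre : (ρ * ·) ⁻¹' Ioi (0 : ℝ) = Ioi 0 := by
    ext r
    simp [hρ]
  conv_lhs => rw [← Real.smul_map_volume_mul_left hρ.ne', abs_of_pos hρ]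
  rw [Measure.restrict_smul, lintegral_smul_measure, smul_eq_mul,
    (measurableEmbedding_mulLeft₀ hρ.ne').restrict_map,
    (measurableEmbedding_mulLeft₀ hρ.ne').lintegral_map, hpre]

variable {d : ℕ}

lemma lintegral_radialMeasure (f : ℝ → ℝ≥0∞) :
    ∫⁻ r, f r ∂radialMeasure d = ∫⁻ r in Ioi 0, ENNReal.ofReal (r ^ (d - 1)) * f r :=
  lintegral_withDensity_eq_lintegral_mul_non_measurable₀ _ (by fun_prop) (by simp) f

lemma lintegral_radialMeasure_eq_pow_mul (hd : 1 ≤ d) (f : ℝ → ℝ≥0∞) {ρ : ℝ} (hρ : 0 < ρ) :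
    ∫⁻ r, f r ∂radialMeasure d =
      ENNReal.ofReal ρ ^ d * ∫⁻ r, f (ρ * r) ∂radialMeasure d := by
  obtain ⟨n, rfl⟩ := Nat.exists_eq_add_of_le' hd
  simp only [lintegral_radialMeasure, Nat.add_sub_cancel]
  rw [setLIntegral_Ioi_zero_eq_mul_comp_mul_left _ hρ, ← lintegral_const_mul' _ _ (by finiteness),
    ← lintegral_const_mul' _ _ (by finiteness)]
  refine lintegral_congr fun r => ?_
  rw [mul_pow, ENNReal.ofReal_mul (by positivity), ENNReal.ofReal_pow hρ.le]
  ring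

lemma radialMeasure_eq_smul_map (hd : 1 ≤ d) {ρ : ℝ} (hρ : 0 < ρ) :
    radialMeasure d = ENNReal.ofReal ρ ^ d • (radialMeasure d).map (ρ * ·) := by
  have hmul : Measurable fun r : ℝ => ρ * r := measurable_const_mul ρ
  ext s hs
  rw [Measure.smul_apply, Measure.map_apply hmul hs, ← lintegral_indicator_one hs,
    ← lintegral_indicator_one (hmul hs), lintegral_radialMeasure_eq_pow_mul hd _ hρ, smul_eq_mul]
  rfl

lemma eLpNorm_comp_mul_left_radialMeasure {F : Type*} [NormedAddCommGroup F] (hd : 1 ≤ d)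
    (f : ℝ → F) (q : ℝ≥0∞) {ρ : ℝ} (hρ : 0 < ρ) :
    ENNReal.ofReal ρ ^ (d * q⁻¹.toReal) * eLpNorm (fun r => f (ρ * r)) q (radialMeasure d) =
      eLpNorm f q (radialMeasure d) := by
  have hpow : ENNReal.ofReal ρ ^ d ≠ 0 := pow_ne_zero d (ENNReal.ofReal_pos.2 hρ).ne'
  conv_rhs => rw [radialMeasure_eq_smul_map hd hρ, eLpNorm_smul_measure_of_ne_zero hpow,
    (measurableEmbedding_mulLeft₀ hρ.ne').eLpNorm_map_measure, one_div, smul_eq_mul,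
    ← ENNReal.rpow_natCast, ← ENNReal.rpow_mul]
  rfl

lemma integrable_one_add_rpow_radialMeasure (hd : 1 ≤ d) {m : ℝ} (hm : (d : ℝ) < m) :
    Integrable (fun s : ℝ => (1 + s) ^ (-m)) (radialMeasure d) := by
  have : Nonempty (Fin d) := ⟨⟨0, hd⟩⟩
  have hE := integrable_one_add_norm (E := Ed d) (μ := volume) (r := m) (by simpa)
  rw [integrable_fun_norm_addHaar volume (f := fun s : ℝ => (1 + s) ^ (-m)),
    finrank_euclideanSpace_fin] at hE
  rw [radialMeasure, integrable_withDensity_iff_integrable_smul' (by fun_prop) (by simp)]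
  refine hE.congr ?_
  filter_upwards [ae_restrict_mem measurableSet_Ioi] with s (hs : 0 < s)
  rw [ENNReal.toReal_ofReal (by positivity)]

lemma memLp_one_add_rpow_radialMeasure (hd : 1 ≤ d) {q : ℝ≥0∞} (hq : q ≠ 0) {m : ℝ}
    (hm : d * q⁻¹.toReal < m) :
    MemLp (fun s : ℝ => (1 + s) ^ (-m)) q (radialMeasure d) := by
  have hmeas : AEStronglyMeasurable (fun s : ℝ => (1 + s) ^ (-m)) (radialMeasure d) :=
    Measurable.aestronglyMeasurable (by fun_prop)
  have hpos : ∀ᵐ s ∂radialMeasure d, 0 < s :=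
    withDensity_absolutelyContinuous _ _ (ae_restrict_mem measurableSet_Ioi)
  have m_pos : 0 < m := (by positivity : 0 ≤ d * q⁻¹.toReal).trans_lt hm
  rcases eq_or_ne q ∞ with rfl | hq'
  · refine memLp_top_of_bound hmeas 1 (hpos.mono fun s hs => ?_)
    rw [Real.norm_of_nonneg (by positivity)]
    exact Real.rpow_le_one_of_one_le_of_nonpos (by linarith) (by linarith)
  · have q_pos : 0 < q.toReal := ENNReal.toReal_pos hq hq'
    rw [ENNReal.toReal_inv, ← div_eq_mul_inv, div_lt_iff₀ q_pos] at hm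
    rw [← integrable_norm_rpow_iff hmeas hq hq']
    refine (integrable_one_add_rpow_radialMeasure hd hm).congr (hpos.mono fun s hs => ?_)
    simp only [Real.norm_of_nonneg (by positivity : 0 ≤ (1 + s) ^ (-m))]
    rw [← Real.rpow_mul (by positivity), neg_mul]

lemma exists_rpow_mul_eLpNorm_one_add_mul_rpow_le (hd : 1 ≤ d) {q : ℝ≥0∞} (hq : q ≠ 0) {m : ℝ}
    (hm : d * q⁻¹.toReal < m) :
    ∃ W : ℝ≥0, ∀ ρ : ℝ, 0 ≤ ρ → ENNReal.ofReal ρ ^ (d * q⁻¹.toReal) *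
      eLpNorm (fun r : ℝ => (1 + ρ * r) ^ (-m)) q (radialMeasure d) ≤ W := by
  have hw := memLp_one_add_rpow_radialMeasure hd hq hm
  refine ⟨max 1 (eLpNorm (fun s : ℝ => (1 + s) ^ (-m)) q (radialMeasure d)).toNNReal,
    fun ρ hρ => ?_⟩
  rcases hρ.eq_or_lt with rfl | hρ
  · simp only [zero_mul, add_zero, Real.one_rpow, ENNReal.ofReal_zero]
    rcases eq_or_ne q ∞ with rfl | hq'
    · have hone : eLpNorm (fun _ : ℝ => (1 : ℝ)) ∞ (radialMeasure d) ≤ 1 := by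
        simpa using eLpNormEssSup_le_of_ae_bound (μ := radialMeasure d) (f := fun _ : ℝ => (1 : ℝ))
          (C := 1) (by simp)
      simpa using le_max_of_le_left hone
    · have q_pos : 0 < q.toReal := ENNReal.toReal_pos hq hq'
      have hexp : 0 < d * q⁻¹.toReal := by
        rw [ENNReal.toReal_inv]
        positivity
      rw [ENNReal.zero_rpow_of_pos hexp, zero_mul]
      exact zero_le
  · rw [eLpNorm_comp_mul_left_radialMeasure hd (fun s => (1 + s) ^ (-m)) q hρ, ENNReal.coe_max,
      ENNReal.coe_toNNReal hw.eLpNorm_ne_top]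
    exact le_max_right _ _

lemma eLpNorm_ofReal_radialMeasure {F : Type*} [NormedAddCommGroup F] {p : ℝ} (hp : 0 < p)
    (κ : ℝ → F) :
    eLpNorm κ (ENNReal.ofReal p) (radialMeasure d) =
      (∫⁻ r in Ioi 0, ENNReal.ofReal (‖κ r‖ ^ p * r ^ (d - 1))) ^ (1 / p) := by
  rw [eLpNorm_eq_lintegral_rpow_enorm_toReal (by simpa) ENNReal.ofReal_ne_top,
    ENNReal.toReal_ofReal hp.le, lintegral_radialMeasure]
  congr 1
  refine lintegral_congr fun r => ?_
  rw [mul_comm, ENNReal.ofReal_mul (by positivity), ← ofReal_norm,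
    ENNReal.ofReal_rpow_of_nonneg (norm_nonneg _) hp.le]

end RadialMeasure

section RadialKernel

variable {d : ℕ}

/-- The Fourier transform `K̂(ξ) = ∫_0^∞ κ(r) σ̂_r(ξ) dr` of the radial kernel
`K = ∫_0^∞ κ(r) σ_r dr`; it is `0` where the integral diverges. -/
def radialKernelFourier (d : ℕ) (κ : ℝ → ℂ) (ξ : Ed d) : ℂ :=
  ∫ r in Ioi 0, κ r * sphereFourier d r ξ

lemma exists_enorm_radialKernelFourier_le_lintegral (hd : 1 ≤ d) :
    ∃ A : ℝ≥0, ∀ (κ : ℝ → ℂ) (ξ : Ed d), ‖radialKernelFourier d κ ξ‖ₑ ≤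
      A * ∫⁻ r, ‖((1 + ‖ξ‖ * r) ^ (-(((d : ℝ) - 1) / 2))) • κ r‖ₑ ∂radialMeasure d := by
  obtain ⟨A, hA⟩ := exists_norm_sphereFourier_le hd
  refine ⟨A.toNNReal, fun κ ξ => (enorm_integral_le_lintegral_enorm _).trans ?_⟩
  rw [lintegral_radialMeasure, ← lintegral_const_mul' _ _ (by finiteness)]
  refine setLIntegral_mono' measurableSet_Ioi fun r (hr : 0 < r) => ?_
  rw [← ofReal_norm, ← ofReal_norm, norm_mul, norm_smul,
    Real.norm_of_nonneg (Real.rpow_nonneg (by positivity : 0 ≤ 1 + ‖ξ‖ * r) _),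
    ← ENNReal.ofReal_mul (by positivity), ← ENNReal.ofReal, ← ENNReal.ofReal_mul' (by positivity)]
  refine ENNReal.ofReal_le_ofReal ?_
  calc ‖κ r‖ * ‖sphereFourier d r ξ‖
      ≤ ‖κ r‖ * (A * (r ^ (d - 1) * (1 + r * ‖ξ‖) ^ (-(((d : ℝ) - 1) / 2)))) := by
        gcongr
        exact hA r hr ξ
    _ = A * (r ^ (d - 1) * ((1 + ‖ξ‖ * r) ^ (-(((d : ℝ) - 1) / 2)) * ‖κ r‖)) := by
        rw [mul_comm r]
        ring

theorem exists_enorm_radialKernelFourier_mul_rpow_le {p q : ℝ≥0∞} [ENNReal.HolderConjugate p q]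
    (hq : d * q⁻¹.toReal < ((d : ℝ) - 1) / 2) :
    ∃ C : ℝ≥0, ∀ κ, AEStronglyMeasurable κ (radialMeasure d) → ∀ ξ,
      ‖radialKernelFourier d κ ξ‖ₑ * ‖ξ‖ₑ ^ (d * q⁻¹.toReal) ≤
        C * eLpNorm κ p (radialMeasure d) := by
  have hd : 1 ≤ d := by
    by_contra! h
    obtain rfl : d = 0 := by omega
    norm_num at hq
  obtain ⟨A, hA⟩ := exists_enorm_radialKernelFourier_le_lintegral hd
  obtain ⟨W, hW⟩ := exists_rpow_mul_eLpNorm_one_add_mul_rpow_le hd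
    (ENNReal.HolderConjugate.ne_zero q p) hq
  refine ⟨A * W, fun κ hκ ξ => ?_⟩
  let w : ℝ → ℝ := fun r => (1 + ‖ξ‖ * r) ^ (-(((d : ℝ) - 1) / 2))
  have hw : AEStronglyMeasurable w (radialMeasure d) :=
    Measurable.aestronglyMeasurable (by fun_prop)
  calc ‖radialKernelFourier d κ ξ‖ₑ * ‖ξ‖ₑ ^ (d * q⁻¹.toReal)
      ≤ A * eLpNorm (w • κ) 1 (radialMeasure d) * ‖ξ‖ₑ ^ (d * q⁻¹.toReal) := by
        rw [eLpNorm_one_eq_lintegral_enorm]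
        gcongr
        exact hA κ ξ
    _ ≤ A * (eLpNorm w q (radialMeasure d) * eLpNorm κ p (radialMeasure d)) *
          ‖ξ‖ₑ ^ (d * q⁻¹.toReal) := by
        gcongr
        exact eLpNorm_smul_le_mul_eLpNorm hκ hw
    _ = A * (ENNReal.ofReal ‖ξ‖ ^ (d * q⁻¹.toReal) * eLpNorm w q (radialMeasure d)) *
          eLpNorm κ p (radialMeasure d) := by
        rw [ofReal_norm]
        ring
    _ ≤ (A * W : ℝ≥0) * eLpNorm κ p (radialMeasure d) := by
        rw [ENNReal.coe_mul]
        gcongr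
        exact hW ‖ξ‖ (norm_nonneg ξ)

end RadialKernel

section Vanishing

variable {E F : Type*} [NormedAddCommGroup E] [NormedSpace ℝ E] [NormedAddCommGroup F]
  [NormedSpace ℝ F]

lemma norm_iteratedFDeriv_le_mul_pow_of_vanishing {g : E → F} {n : ℕ} {B : ℝ}
    (hg : ContDiff ℝ n g) (h0 : ∀ k < n, iteratedFDeriv ℝ k g 0 = 0)
    (hB : ∀ x, ‖iteratedFDeriv ℝ n g x‖ ≤ B) {k j : ℕ} (hkj : k + j = n) (x : E) :
    ‖iteratedFDeriv ℝ k g x‖ ≤ B * ‖x‖ ^ j := by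
  have hB0 : 0 ≤ B := (norm_nonneg _).trans (hB 0)
  induction j generalizing k x with
  | zero =>
    obtain rfl : k = n := hkj
    simpa using hB x
  | succ j ih =>
    have hkn : k < n := by omega
    have hdiff : Differentiable ℝ (iteratedFDeriv ℝ k g) :=
      hg.differentiable_iteratedFDeriv (by exact_mod_cast hkn)
    have hfderiv (y : E) (hy : y ∈ closedBall 0 ‖x‖) :
        ‖fderiv ℝ (iteratedFDeriv ℝ k g) y‖ ≤ B * ‖x‖ ^ j := by
      rw [norm_fderiv_iteratedFDeriv]
      refine (ih (by omega) y).trans ?_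
      gcongr
      exact mem_closedBall_zero_iff.1 hy
    simpa [h0 k hkn, pow_succ, mul_assoc] using
      (convex_closedBall (0 : E) ‖x‖).norm_image_sub_le_of_norm_fderiv_le (fun y _ => hdiff y)
        hfderiv (x := 0) (y := x) (by simp) (by simp)

lemma exists_norm_le_mul_rpow_of_vanishing (g : SchwartzMap E F) {n : ℕ}
    (h0 : ∀ k < n, iteratedFDeriv ℝ k g 0 = 0) {a : ℝ} (ha : 0 ≤ a) (han : a ≤ n) :
    ∃ B, ∀ x, ‖g x‖ ≤ B * ‖x‖ ^ a := by
  obtain ⟨B₀, hB₀⟩ := g.decay 0 0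
  obtain ⟨B₁, hB₁⟩ := g.decay 0 n
  simp only [pow_zero, one_mul, norm_iteratedFDeriv_zero] at hB₀ hB₁
  have hB : 0 ≤ max B₀ B₁ := le_max_of_le_left hB₀.1.le
  refine ⟨max B₀ B₁, fun x => ?_⟩
  rcases le_total 1 ‖x‖ with hx | hx
  · calc ‖g x‖ ≤ B₀ * 1 := (hB₀.2 x).trans_eq (mul_one B₀).symm
      _ ≤ max B₀ B₁ * ‖x‖ ^ a :=
        mul_le_mul (le_max_left _ _) (Real.one_le_rpow hx ha) zero_le_one hB
  · calc ‖g x‖ ≤ B₁ * ‖x‖ ^ (n : ℝ) := by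
          simpa using norm_iteratedFDeriv_le_mul_pow_of_vanishing (g.smooth n) h0 hB₁.2
            (zero_add n) x
      _ ≤ max B₀ B₁ * ‖x‖ ^ a :=
        mul_le_mul (le_max_right _ _)
          (Real.rpow_le_rpow_of_exponent_ge' (norm_nonneg x) hx ha han) (by positivity) hB

end Vanishing

section Mollifier

variable {d : ℕ}

lemma fourier_psiOf {ψ₀ : Ed d → ℂ} (hψ₀ : Integrable ψ₀) (ξ : Ed d) :
    𝓕 (psiOf d ψ₀) ξ = 𝓕 ψ₀ ξ ^ 2 :=
  (Real.fourier_mul_convolution_eq hψ₀ hψ₀ ξ).trans (sq _).symm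

lemma exists_enorm_fourier_psiOf_le (ψ₀ : SchwartzMap (Ed d) ℂ) {n : ℕ}
    (h0 : ∀ k < n, iteratedFDeriv ℝ k (𝓕 (ψ₀ : Ed d → ℂ)) 0 = 0) {a : ℝ} (ha : 0 ≤ a)
    (han : a ≤ 2 * n) :
    ∃ B : ℝ≥0, ∀ ξ, ‖𝓕 (psiOf d ψ₀) ξ‖ₑ ≤ B * ‖ξ‖ₑ ^ a := by
  rw [← SchwartzMap.fourier_coe] at h0
  obtain ⟨B, hB⟩ := exists_norm_le_mul_rpow_of_vanishing (𝓕 ψ₀) h0 (a := a / 2)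
    (by positivity) (by linarith)
  refine ⟨(B ^ 2).toNNReal, fun ξ => ?_⟩
  rw [fourier_psiOf ψ₀.integrable, ← SchwartzMap.fourier_coe, ← ofReal_norm, ← ofReal_norm,
    ENNReal.ofReal_rpow_of_nonneg (norm_nonneg ξ) ha, ← ENNReal.ofReal,
    ← ENNReal.ofReal_mul (sq_nonneg B), norm_pow]
  refine ENNReal.ofReal_le_ofReal ?_
  calc ‖𝓕 ψ₀ ξ‖ ^ 2 ≤ (B * ‖ξ‖ ^ (a / 2)) ^ 2 := by gcongr; exact hB ξ
    _ = B ^ 2 * ‖ξ‖ ^ a := by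
      rw [mul_pow, ← Real.rpow_mul_natCast (norm_nonneg ξ), Nat.cast_two,
        div_mul_cancel₀ _ two_ne_zero]

lemma Admissible.hasCompactSupport {ψ₀ : Ed d → ℂ} (hψ : Admissible d ψ₀) :
    HasCompactSupport ψ₀ :=
  .intro (isCompact_closedBall 0 (1 / 10)) fun x hx => by
    by_contra h
    exact hx (mem_closedBall_zero_iff.2 (hψ.2.1 x h))

end Mollifier

theorem exists_enorm_radialKernelFourier_mul_fourier_psiOf_le {d : ℕ} {p q : ℝ≥0∞}
    [ENNReal.HolderConjugate p q] (hq : d * q⁻¹.toReal < ((d : ℝ) - 1) / 2)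
    (ψ₀ : SchwartzMap (Ed d) ℂ) {n : ℕ} (hn : d * q⁻¹.toReal ≤ 2 * n)
    (h0 : ∀ k < n, iteratedFDeriv ℝ k (𝓕 (ψ₀ : Ed d → ℂ)) 0 = 0) :
    ∃ C : ℝ≥0, ∀ κ, AEStronglyMeasurable κ (radialMeasure d) → ∀ ξ,
      ‖radialKernelFourier d κ ξ * 𝓕 (psiOf d ψ₀) ξ‖ₑ ≤ C * eLpNorm κ p (radialMeasure d) := by
  obtain ⟨A, hA⟩ := exists_enorm_radialKernelFourier_mul_rpow_le (p := p) hq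
  obtain ⟨B, hB⟩ := exists_enorm_fourier_psiOf_le ψ₀ h0 (by positivity) hn
  refine ⟨B * A, fun κ hκ ξ => ?_⟩
  calc ‖radialKernelFourier d κ ξ * 𝓕 (psiOf d ψ₀) ξ‖ₑ
      ≤ ‖radialKernelFourier d κ ξ‖ₑ * (B * ‖ξ‖ₑ ^ (d * q⁻¹.toReal)) := by
        rw [enorm_mul]
        gcongr
        exact hB ξ
    _ = B * (‖radialKernelFourier d κ ξ‖ₑ * ‖ξ‖ₑ ^ (d * q⁻¹.toReal)) := by ring
    _ ≤ (B * A : ℝ≥0) * eLpNorm κ p (radialMeasure d) := by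
        rw [ENNReal.coe_mul, mul_assoc]
        exact mul_le_mul_right (hA κ hκ ξ) _

theorem fourier_transform_bound_general (d : ℕ) (p : ℝ) (hp1 : 1 ≤ p)
    (hp : p < 2 * (d : ℝ) / ((d : ℝ) + 1)) (ψ₀ : SchwartzMap (Ed d) ℂ) (n : ℕ)
    (hn : (d : ℝ) * (1 - 1 / p) ≤ 2 * n)
    (h0 : ∀ k < n, iteratedFDeriv ℝ k (𝓕 (ψ₀ : Ed d → ℂ)) 0 = 0) :
    ∃ C : ℝ, 0 < C ∧
      ∀ κ : ℝ → ℂ, AEStronglyMeasurable κ (volume.restrict (Ioi 0)) → ∀ ξ : Ed d,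
        ENNReal.ofReal ‖radialKernelFourier d κ ξ * 𝓕 (psiOf d ψ₀) ξ‖ ≤
          ENNReal.ofReal C *
            (∫⁻ r in Ioi (0 : ℝ), ENNReal.ofReal (‖κ r‖ ^ p * r ^ (d - 1))) ^ (1 / p) := by
  have p_pos : 0 < p := one_pos.trans_le hp1
  have := ENNReal.HolderConjugate.inv_one_sub_inv' (ENNReal.one_le_ofReal.2 hp1)
  have hq : (1 - (ENNReal.ofReal p)⁻¹)⁻¹⁻¹.toReal = 1 - 1 / p := by
    rw [inv_inv, ENNReal.toReal_sub_of_le (ENNReal.inv_le_one.2 (ENNReal.one_le_ofReal.2 hp1))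
      ENNReal.one_ne_top, ENNReal.toReal_one, ENNReal.toReal_inv, ENNReal.toReal_ofReal p_pos.le,
      one_div]
  have hlt : d * (1 - 1 / p) < ((d : ℝ) - 1) / 2 := by
    rw [lt_div_iff₀ (by positivity)] at hp
    field_simp
    linarith
  obtain ⟨C, hC⟩ := exists_enorm_radialKernelFourier_mul_fourier_psiOf_le
    (p := ENNReal.ofReal p) (hq ▸ hlt) ψ₀ (hq ▸ hn) h0
  refine ⟨C + 1, by positivity, fun κ hκ ξ => ?_⟩
  rw [ofReal_norm, ← eLpNorm_ofReal_radialMeasure p_pos]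
  refine (hC κ (hκ.mono_ac (withDensity_absolutelyContinuous _ _)) ξ).trans ?_
  gcongr
  rw [← ENNReal.ofReal_coe_nnreal]
  exact ENNReal.ofReal_le_ofReal (by linarith)

/-- the `L^∞` Fourier transform bound
`‖K̂ ψ̂‖_∞ ≤ C_p (∫_0^∞ |κ(r)|^p r^{d-1} dr)^{1/p}` for `K = ∫_0^∞ κ(r) σ_r dr`,
where `K̂(ξ) = ∫_0^∞ κ(r) σ̂_r(ξ) dr`. -/
theorem fourier_transform_bound
    (d : ℕ) (hd : 2 ≤ d) (p : ℝ) (hp1 : 1 ≤ p)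
    (hp : p < 2 * (d : ℝ) / ((d : ℝ) + 1))
    (ψ₀ : Ed d → ℂ) (hψ : Admissible d ψ₀) :
    ∃ C : ℝ, 0 < C ∧
      ∀ κ : ℝ → ℂ, Measurable κ →
        (∫⁻ r in Set.Ioi (0 : ℝ), ENNReal.ofReal (‖κ r‖ ^ p * r ^ (d - 1))) < ⊤ →
        ∀ ξ : Ed d,
          ENNReal.ofReal
              ‖(∫ r in Set.Ioi (0 : ℝ), κ r *
                  ∫ x, Complex.exp (-(((2 * Real.pi * ⟪ξ, x⟫) : ℝ) : ℂ) * Complex.I)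
                    ∂(sphereM d r)) *
                𝓕 (psiOf d ψ₀) ξ‖ ≤
            ENNReal.ofReal C *
              (∫⁻ r in Set.Ioi (0 : ℝ),
                  ENNReal.ofReal (‖κ r‖ ^ p * r ^ (d - 1))) ^ (1 / p) := by
  have hn : (d : ℝ) * (1 - 1 / p) ≤ 2 * (20 * d : ℕ) := by
    have : 0 < 1 / p := by positivity
    push_cast
    nlinarith
  obtain ⟨C, hC, h⟩ := fourier_transform_bound_general d p hp1 hp
    (hψ.hasCompactSupport.toSchwartzMap hψ.1) (20 * d) hn hψ.2.2.2
  exact ⟨C, hC, fun κ hκ _ => h κ hκ.aestronglyMeasurable⟩
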